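/- Let W be a standard Brownian motion on a probability space, let γ < 1/2 with γ ≠ 0, and let t > 0. Then the random variable B̃(t) := (1/t) ∫₀ᵗ s^{−γ−1} W(s) ds is well defined (the integral converges almost surely) and has the Gaussian distribution with mean 0 and variance 2 t^{−2γ−1} / ((1 − γ)(1 − 2γ)). -/

import Mathlib

open MeasureTheory Set Filter ProbabilityTheory

/-- A standard Brownian motion on `[0,∞)`: a measurable, a.s. continuous, Gaussian
process starting at `0` whose covariance function is `Cov(W(s), W(w)) = min s w`
(every finite linear combination of its values is centered Gaussian). -/
def IsStandardBrownianMotion {Ω : Type*} [MeasurableSpace Ω] (P : Measure Ω)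
    (W : ℝ → Ω → ℝ) : Prop :=
  IsProbabilityMeasure P ∧
  (∀ t, Measurable (W t)) ∧
  (∀ᵐ ω ∂P, ContinuousOn (fun t => W t ω) (Ici 0)) ∧
  (∀ᵐ ω ∂P, W 0 ω = 0) ∧
  (∀ (n : ℕ) (c : Fin n → ℝ) (ts : Fin n → ℝ), (∀ i, 0 ≤ ts i) →
    ∃ v : NNReal, Measure.map (fun ω => ∑ i, c i * W (ts i) ω) P = gaussianReal 0 v) ∧
  (∀ s ∈ Ici (0 : ℝ), ∀ w ∈ Ici (0 : ℝ), ∫ ω, W s ω * W w ω ∂P = min s w)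

/-!
Let `X` be a jointly measurable Gaussian process with `∫ ‖X s‖₂ dμ(s) < ∞`. By Minkowski's
inequality `Y = ∫ X s dμ(s)` lies in `L²`, and by Fubini `⟪Z, Y⟫ = ∫ ⟪Z, X s⟫ dμ(s)` for every
`Z` in `L²`. Hence `Y` is orthogonal to everything orthogonal to all the `X s`, so it belongs to
the closed linear span of the process. That span consists of Gaussian variables, because a limit
in `L²` preserves the Gaussian form of the characteristic function. Fubini also gives
`Var Y = ∬ cov(X r, X s)`.

For `X s = s ^ a * W s` on `(0, t]` we have `‖X s‖₂ = s ^ (a + 1/2)`, which is integrable exactly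
when `-3/2 < a`; with `a = -γ - 1` this is `γ < 1/2`. The covariance kernel is symmetric, so its
double integral is twice that over `s ≤ r`, where `min r s = s`.
-/

open Function (uncurry)
open scoped ENNReal NNReal

section JointMeasurability

theorem aestronglyMeasurable_timeChange_simpleFunc {S T Ω E : Type*} [MeasurableSpace S]
    [MeasurableSpace Ω] [TopologicalSpace E] [TopologicalSpace.PseudoMetrizableSpace E]
    {μ : Measure S} {P : Measure Ω} {X : T → Ω → E}
    (hX : ∀ t, AEStronglyMeasurable (X t) P) (φ : SimpleFunc S T) :
    AEStronglyMeasurable (fun z : S × Ω ↦ X (φ z.1) z.2) (μ.prod P) := by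
  have cover : (⋃ t : φ.range, (fun z : S × Ω ↦ φ z.1) ⁻¹' {t.1}) = univ :=
    iUnion_eq_univ_iff.2 fun z ↦ ⟨⟨φ z.1, φ.mem_range_self z.1⟩, rfl⟩
  rw [← Measure.restrict_univ (μ := μ.prod P), ← cover, aestronglyMeasurable_iUnion_iff]
  intro t
  have measurableSet_fibre : MeasurableSet ((fun z : S × Ω ↦ φ z.1) ⁻¹' {t.1}) :=
    measurable_fst (φ.measurableSet_fiber t.1)
  refine ((hX t).comp_snd.restrict).congr ?_
  filter_upwards [ae_restrict_mem measurableSet_fibre] with z hz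
  rw [show φ z.1 = t from hz]

theorem aestronglyMeasurable_timeChange_of_ae_continuous {S T Ω E : Type*} [MeasurableSpace S]
    [TopologicalSpace T] [MeasurableSpace Ω] [TopologicalSpace E]
    [TopologicalSpace.PseudoMetrizableSpace E] {μ : Measure S} {P : Measure Ω}
    {τ : S → T} (hτ : StronglyMeasurable τ) {X : T → Ω → E}
    (hX : ∀ t, AEStronglyMeasurable (X t) P) (hcont : ∀ᵐ ω ∂P, Continuous (X · ω)) :
    AEStronglyMeasurable (fun z : S × Ω ↦ X (τ z.1) z.2) (μ.prod P) := by
  refine aestronglyMeasurable_of_tendsto_ae atTop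
    (fun n ↦ aestronglyMeasurable_timeChange_simpleFunc hX (hτ.approx n)) ?_
  filter_upwards [Measure.quasiMeasurePreserving_snd.ae hcont] with z hz
  exact (hz.tendsto (τ z.1)).comp (hτ.tendsto_approx z.1)

end JointMeasurability

section Minkowski

variable {T Ω : Type*} [MeasurableSpace T] [MeasurableSpace Ω] {μ : Measure T} {P : Measure Ω}

theorem eLpNorm_two_sq (f : Ω → ℝ≥0∞) : eLpNorm f 2 P ^ 2 = ∫⁻ ω, f ω ^ 2 ∂P := by
  simpa using eLpNorm_nnreal_pow_eq_lintegral (f := f) (μ := P) (two_ne_zero (α := ℝ≥0))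

theorem lintegral_mul_le_eLpNorm_two_mul {f g : Ω → ℝ≥0∞} (hf : AEMeasurable f P)
    (hg : AEMeasurable g P) : ∫⁻ ω, f ω * g ω ∂P ≤ eLpNorm f 2 P * eLpNorm g 2 P := by
  simpa [eLpNorm_eq_lintegral_rpow_enorm_toReal] using
    ENNReal.lintegral_mul_le_Lp_mul_Lq P Real.HolderConjugate.two_two hf hg

variable [SFinite P]

theorem aemeasurable_eLpNorm {E : Type*} [TopologicalSpace E] [ContinuousENorm E] {f : T → Ω → E}
    (hf : AEStronglyMeasurable (uncurry f) (μ.prod P)) {p : ℝ≥0∞} (hp : p ≠ ∞) :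
    AEMeasurable (fun s ↦ eLpNorm (f s) p P) μ := by
  rcases eq_or_ne p 0 with rfl | hp₀
  · simp only [eLpNorm_exponent_zero, aemeasurable_const]
  simp only [eLpNorm_eq_lintegral_rpow_enorm_toReal hp₀ hp]
  exact ((hf.enorm.pow_const _).lintegral_prod_right').pow_const _

theorem lintegral_lintegral_mul_le_eLpNorm_two_mul {g : Ω → ℝ≥0∞} {f : T → Ω → ℝ≥0∞}
    (hg : AEMeasurable g P) (hf : AEMeasurable (uncurry f) (μ.prod P)) :
    ∫⁻ s, ∫⁻ ω, g ω * f s ω ∂P ∂μ ≤ eLpNorm g 2 P * ∫⁻ s, eLpNorm (f s) 2 P ∂μ := by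
  rw [← lintegral_const_mul'' _
    (aemeasurable_eLpNorm hf.aestronglyMeasurable ENNReal.ofNat_ne_top)]
  refine lintegral_mono_ae ?_
  filter_upwards [hf.aestronglyMeasurable.prodMk_left] with s hs
  exact lintegral_mul_le_eLpNorm_two_mul hg hs.aemeasurable

variable [SFinite μ]

theorem lintegral_mul_lintegral_swap {g : Ω → ℝ≥0∞} {f : T → Ω → ℝ≥0∞}
    (hg : AEMeasurable g P) (hf : AEMeasurable (uncurry f) (μ.prod P)) :
    ∫⁻ ω, g ω * ∫⁻ s, f s ω ∂μ ∂P = ∫⁻ s, ∫⁻ ω, g ω * f s ω ∂P ∂μ := by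
  rw [lintegral_lintegral_swap (hg.comp_snd.mul hf)]
  refine lintegral_congr_ae ?_
  filter_upwards [hf.prod_swap.aestronglyMeasurable.prodMk_left] with ω hω
  exact (lintegral_const_mul'' _ hω.aemeasurable).symm

/-- Dividing the usual bound `‖F‖² ≤ ‖F‖ N` by `‖F‖` would require `‖F‖ < ∞`; applying
Cauchy–Schwarz once for each of the two factors `F` yields `‖F‖² ≤ N²` directly. -/
theorem eLpNorm_two_lintegral_le {f : T → Ω → ℝ≥0∞} (hf : AEMeasurable (uncurry f) (μ.prod P)) :
    eLpNorm (fun ω ↦ ∫⁻ s, f s ω ∂μ) 2 P ≤ ∫⁻ s, eLpNorm (f s) 2 P ∂μ := by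
  set F : Ω → ℝ≥0∞ := fun ω ↦ ∫⁻ s, f s ω ∂μ
  set N := ∫⁻ s, eLpNorm (f s) 2 P ∂μ
  have hF : AEMeasurable F P := hf.lintegral_prod_left'
  refine (ENNReal.pow_le_pow_left_iff two_ne_zero).1 ?_
  calc eLpNorm F 2 P ^ 2
  _ = ∫⁻ ω, F ω * ∫⁻ s, f s ω ∂μ ∂P := by rw [eLpNorm_two_sq]; simp only [sq, F]
  _ = ∫⁻ s, ∫⁻ ω, f s ω * F ω ∂P ∂μ := by
      simp only [lintegral_mul_lintegral_swap hF hf, mul_comm]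
  _ ≤ ∫⁻ s, eLpNorm (f s) 2 P * N ∂μ := by
      refine lintegral_mono_ae ?_
      filter_upwards [hf.aestronglyMeasurable.prodMk_left] with s hs
      have h_slice : AEMeasurable (f s) P := hs.aemeasurable
      rw [lintegral_mul_lintegral_swap h_slice hf]
      exact lintegral_lintegral_mul_le_eLpNorm_two_mul h_slice hf
  _ = N ^ 2 := by
      rw [lintegral_mul_const'' _
        (aemeasurable_eLpNorm hf.aestronglyMeasurable ENNReal.ofNat_ne_top), sq]

end Minkowski

section ProcessIntegral

variable {T Ω E : Type*} [MeasurableSpace T] [MeasurableSpace Ω] {μ : Measure T} {P : Measure Ω}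
  [NormedAddCommGroup E] {X : T → Ω → E} {Z : Ω → ℝ}

theorem ae_memLp_of_lintegral_eLpNorm_ne_top [SFinite P] {p : ℝ≥0∞} (hp : p ≠ ∞)
    (hX : AEStronglyMeasurable (uncurry X) (μ.prod P))
    (hfin : ∫⁻ s, eLpNorm (X s) p P ∂μ ≠ ∞) : ∀ᵐ s ∂μ, MemLp (X s) p P := by
  filter_upwards [hX.prodMk_left, ae_lt_top' (aemeasurable_eLpNorm hX hp) hfin]
    with s hs hs_lt using ⟨hs, hs_lt⟩

variable [NormedSpace ℝ E]

theorem integrable_smul_uncurry [SFinite P] (hX : AEStronglyMeasurable (uncurry X) (μ.prod P))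
    (hfin : ∫⁻ s, eLpNorm (X s) 2 P ∂μ ≠ ∞) (hZ : MemLp Z 2 P) :
    Integrable (fun z : T × Ω ↦ Z z.2 • X z.1 z.2) (μ.prod P) := by
  have h_meas : AEStronglyMeasurable (fun z : T × Ω ↦ Z z.2 • X z.1 z.2) (μ.prod P) :=
    hZ.1.comp_snd.smul hX
  refine ⟨h_meas, ?_⟩
  calc ∫⁻ z, ‖Z z.2 • X z.1 z.2‖ₑ ∂μ.prod P
  _ = ∫⁻ s, ∫⁻ ω, ‖Z ω‖ₑ * ‖X s ω‖ₑ ∂P ∂μ := by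
      rw [lintegral_prod _ h_meas.enorm]
      simp only [enorm_smul]
  _ ≤ eLpNorm Z 2 P * ∫⁻ s, eLpNorm (X s) 2 P ∂μ := by
      simpa only [eLpNorm_enorm] using lintegral_lintegral_mul_le_eLpNorm_two_mul
        (f := fun s ω ↦ ‖X s ω‖ₑ) hZ.1.enorm hX.enorm
  _ < ∞ := ENNReal.mul_lt_top hZ.2 hfin.lt_top

variable [SFinite μ]

theorem memLp_two_integral [SFinite P] (hX : AEStronglyMeasurable (uncurry X) (μ.prod P))
    (hfin : ∫⁻ s, eLpNorm (X s) 2 P ∂μ ≠ ∞) : MemLp (fun ω ↦ ∫ s, X s ω ∂μ) 2 P := by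
  refine ⟨hX.prod_swap.integral_prod_right', lt_of_le_of_lt ?_ hfin.lt_top⟩
  calc eLpNorm (fun ω ↦ ∫ s, X s ω ∂μ) 2 P
  _ ≤ eLpNorm (fun ω ↦ ∫⁻ s, ‖X s ω‖ₑ ∂μ) 2 P :=
      eLpNorm_mono_enorm fun ω ↦ enorm_integral_le_lintegral_enorm _
  _ ≤ ∫⁻ s, eLpNorm (X s) 2 P ∂μ := by
      simpa only [eLpNorm_enorm] using
        eLpNorm_two_lintegral_le (f := fun s ω ↦ ‖X s ω‖ₑ) hX.enorm

theorem ae_integrable_of_lintegral_eLpNorm_ne_top [IsFiniteMeasure P]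
    (hX : AEStronglyMeasurable (uncurry X) (μ.prod P))
    (hfin : ∫⁻ s, eLpNorm (X s) 2 P ∂μ ≠ ∞) : ∀ᵐ ω ∂P, Integrable (X · ω) μ := by
  simpa using (integrable_smul_uncurry hX hfin (memLp_const (1 : ℝ))).prod_left_ae

theorem integral_smul_integral_swap [SFinite P]
    (hX : AEStronglyMeasurable (uncurry X) (μ.prod P))
    (hfin : ∫⁻ s, eLpNorm (X s) 2 P ∂μ ≠ ∞) (hZ : MemLp Z 2 P) :
    ∫ ω, Z ω • ∫ s, X s ω ∂μ ∂P = ∫ s, ∫ ω, Z ω • X s ω ∂P ∂μ := by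
  rw [integral_integral_swap (integrable_smul_uncurry hX hfin hZ)]
  simp only [integral_smul]

theorem integral_integral_swap_of_lintegral_eLpNorm_ne_top [IsFiniteMeasure P]
    (hX : AEStronglyMeasurable (uncurry X) (μ.prod P))
    (hfin : ∫⁻ s, eLpNorm (X s) 2 P ∂μ ≠ ∞) :
    ∫ ω, ∫ s, X s ω ∂μ ∂P = ∫ s, ∫ ω, X s ω ∂P ∂μ := by
  simpa using integral_smul_integral_swap hX hfin (memLp_const (1 : ℝ))

end ProcessIntegral

section Covariance

variable {T Ω : Type*} [MeasurableSpace T] [MeasurableSpace Ω] {μ : Measure T} [SFinite μ]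
  {P : Measure Ω} [IsProbabilityMeasure P] {X : T → Ω → ℝ} {Z : Ω → ℝ}

theorem covariance_integral_right (hX : AEStronglyMeasurable (uncurry X) (μ.prod P))
    (hfin : ∫⁻ s, eLpNorm (X s) 2 P ∂μ ≠ ∞) (hZ : MemLp Z 2 P) :
    cov[Z, fun ω ↦ ∫ s, X s ω ∂μ; P] = ∫ s, cov[Z, X s; P] ∂μ := by
  have h_mul : Integrable (fun s ↦ P[Z * X s]) μ :=
    (integrable_smul_uncurry hX hfin hZ).integral_prod_left
  have h_mean : Integrable (fun s ↦ P[X s]) μ := by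
    simpa using (integrable_smul_uncurry hX hfin (memLp_const (1 : ℝ))).integral_prod_left
  calc cov[Z, fun ω ↦ ∫ s, X s ω ∂μ; P]
  _ = P[fun ω ↦ Z ω • ∫ s, X s ω ∂μ] - P[Z] * ∫ ω, ∫ s, X s ω ∂μ ∂P :=
      covariance_eq_sub hZ (memLp_two_integral hX hfin)
  _ = ∫ s, (P[Z * X s] - P[Z] * P[X s]) ∂μ := by
      rw [integral_smul_integral_swap hX hfin hZ,
        integral_integral_swap_of_lintegral_eLpNorm_ne_top hX hfin,
        integral_sub h_mul (h_mean.const_mul _), integral_const_mul]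
      rfl
  _ = ∫ s, cov[Z, X s; P] ∂μ := by
      refine integral_congr_ae ?_
      filter_upwards [ae_memLp_of_lintegral_eLpNorm_ne_top ENNReal.ofNat_ne_top hX hfin] with s hs
      exact (covariance_eq_sub hZ hs).symm

theorem variance_integral (hX : AEStronglyMeasurable (uncurry X) (μ.prod P))
    (hfin : ∫⁻ s, eLpNorm (X s) 2 P ∂μ ≠ ∞) :
    Var[fun ω ↦ ∫ s, X s ω ∂μ; P] = ∫ r, ∫ s, cov[X r, X s; P] ∂μ ∂μ := by
  have h_int := memLp_two_integral hX hfin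
  rw [← covariance_self h_int.aemeasurable, covariance_integral_right hX hfin h_int]
  refine integral_congr_ae ?_
  filter_upwards [ae_memLp_of_lintegral_eLpNorm_ne_top ENNReal.ofNat_ne_top hX hfin] with r hr
  rw [covariance_comm, covariance_integral_right hX hfin hr]

end Covariance

section GaussianLimit

variable {Ω : Type*} [MeasurableSpace Ω] {P : Measure Ω}

theorem toLp_integral_mem_topologicalClosure_span {T : Type*} [MeasurableSpace T] {μ : Measure T}
    [SFinite μ] [SFinite P] {X : T → Ω → ℝ} (hX : AEStronglyMeasurable (uncurry X) (μ.prod P))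
    (hfin : ∫⁻ s, eLpNorm (X s) 2 P ∂μ ≠ ∞) (h_memLp : ∀ s, MemLp (X s) 2 P) :
    (memLp_two_integral hX hfin).toLp ∈
      (Submodule.span ℝ (range fun s ↦ (h_memLp s).toLp)).topologicalClosure := by
  rw [← Submodule.orthogonal_orthogonal_eq_closure, Submodule.mem_orthogonal]
  intro Z hZ
  have inner_toLp {Y : Ω → ℝ} (hY : MemLp Y 2 P) : inner ℝ Z hY.toLp = ∫ ω, Z ω • Y ω ∂P := by
    rw [L2.inner_def]
    refine integral_congr_ae ?_
    filter_upwards [hY.coeFn_toLp] with ω hω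
    rw [hω, real_inner_comm]; rfl
  rw [inner_toLp, integral_smul_integral_swap hX hfin (Lp.memLp Z)]
  refine integral_eq_zero_of_ae (.of_forall fun s ↦ ?_)
  refine (inner_toLp (h_memLp s)).symm.trans ?_
  rw [real_inner_comm]
  exact Submodule.inner_right_of_mem_orthogonal (Submodule.subset_span (mem_range_self s)) hZ

theorem continuous_integral_Lp_two [IsFiniteMeasure P] :
    Continuous fun Y : Lp ℝ 2 P ↦ ∫ ω, Y ω ∂P := by
  have h_inner (Y : Lp ℝ 2 P) :
      inner ℝ (indicatorConstLp 2 MeasurableSet.univ (measure_ne_top P univ) (1 : ℝ)) Y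
        = ∫ ω, Y ω ∂P := by
    rw [L2.inner_indicatorConstLp_one, Measure.restrict_univ]
  exact (continuous_const.inner continuous_id).congr h_inner

theorem continuous_variance_Lp_two [IsProbabilityMeasure P] :
    Continuous fun Y : Lp ℝ 2 P ↦ Var[Y; P] := by
  have h_var (Y : Lp ℝ 2 P) : Var[Y; P] = inner ℝ Y Y - (∫ ω, Y ω ∂P) ^ 2 := by
    rw [variance_eq_sub (Lp.memLp Y), L2.inner_def]
    simp [sq]
  simp only [h_var]
  exact (continuous_id.inner continuous_id).sub (continuous_integral_Lp_two.pow 2)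

theorem continuous_charFun_map_Lp_two [IsProbabilityMeasure P] (t : ℝ) :
    Continuous fun Y : Lp ℝ 2 P ↦ charFun (P.map Y) t := by
  refine continuous_iff_seqContinuous.2 fun Y Y₀ hY ↦ ?_
  have h_distr := (tendstoInMeasure_of_tendsto_Lp hY).tendstoInDistribution
    fun n ↦ (Lp.aestronglyMeasurable (Y n)).aemeasurable
  exact ProbabilityMeasure.tendsto_iff_tendsto_charFun.1 h_distr.tendsto t

theorem isClosed_setOf_hasGaussianLaw [IsProbabilityMeasure P] :
    IsClosed {Y : Lp ℝ 2 P | HasGaussianLaw Y P} := by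
  simp only [hasGaussianLaw_iff_charFun_map_eq (Lp.aestronglyMeasurable _).aemeasurable]
  simp only [ofPred_forall, RCLike.inner_apply', conj_trivial, integral_const_mul,
    variance_const_mul]
  refine isClosed_iInter fun t ↦ isClosed_eq (continuous_charFun_map_Lp_two t) ?_
  have := continuous_integral_Lp_two (P := P)
  have := continuous_variance_Lp_two (P := P)
  fun_prop

theorem hasGaussianLaw_of_mem_span {T : Type*} {X : T → Ω → ℝ} (hG : IsGaussianProcess X P)
    {Y : Lp ℝ 2 P}
    (hY : Y ∈ Submodule.span ℝ (range fun s ↦ (hG.hasGaussianLaw_eval s).memLp_two.toLp)) :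
    HasGaussianLaw Y P := by
  obtain ⟨c, rfl⟩ := Finsupp.mem_span_range_iff_exists_finsupp.1 hY
  have h_memLp (s : T) : MemLp (X s) 2 P := (hG.hasGaussianLaw_eval s).memLp_two
  have h_summand : ∀ᵐ ω ∂P, ∀ s ∈ c.support, (c s • (h_memLp s).toLp) ω = c s • X s ω := by
    refine (Finset.eventually_all _).2 fun s _ ↦ ?_
    filter_upwards [Lp.coeFn_smul (c s) (h_memLp s).toLp, (h_memLp s).coeFn_toLp] with ω h₁ h₂
    rw [h₁, Pi.smul_apply, h₂]
  refine ((hG.smul c).hasGaussianLaw_fun_sum (I := c.support)).congr ?_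
  filter_upwards [Lp.coeFn_fun_finsetSum c.support fun s ↦ c s • (h_memLp s).toLp, h_summand]
    with ω h_sum h_summand
  exact (h_sum.trans (Finset.sum_congr rfl h_summand)).symm

theorem hasGaussianLaw_integral {T : Type*} [MeasurableSpace T] {μ : Measure T} [SFinite μ]
    {X : T → Ω → ℝ} (hG : IsGaussianProcess X P)
    (hX : AEStronglyMeasurable (uncurry X) (μ.prod P))
    (hfin : ∫⁻ s, eLpNorm (X s) 2 P ∂μ ≠ ∞) : HasGaussianLaw (fun ω ↦ ∫ s, X s ω ∂μ) P := by
  have := hG.isProbabilityMeasure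
  have h_closure := closure_minimal (fun _ ↦ hasGaussianLaw_of_mem_span hG)
    isClosed_setOf_hasGaussianLaw
    (toLp_integral_mem_topologicalClosure_span hX hfin fun s ↦
      (hG.hasGaussianLaw_eval s).memLp_two)
  exact HasGaussianLaw.congr h_closure (MemLp.coeFn_toLp _)

end GaussianLimit

section BrownianIntegral

variable {Ω : Type*} [MeasurableSpace Ω] {P : Measure Ω}

theorem eLpNorm_two_eq_sqrt_variance [IsFiniteMeasure P] {X : Ω → ℝ} (hX : MemLp X 2 P)
    (h_mean : P[X] = 0) : eLpNorm X 2 P = ENNReal.ofReal √Var[X; P] := by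
  rw [← (ENNReal.pow_right_strictMono two_ne_zero).injective.eq_iff,
    ← ENNReal.ofReal_pow (Real.sqrt_nonneg _), Real.sq_sqrt (variance_nonneg _ _),
    ← eLpNorm_enorm, eLpNorm_two_sq, ofReal_variance hX]
  simp only [evariance, h_mean, sub_zero]

theorem hasLaw_integral_of_centered {T : Type*} [MeasurableSpace T] {μ : Measure T} [SFinite μ]
    {X : T → Ω → ℝ} (hG : IsGaussianProcess X P) (h_mean : ∀ s, P[X s] = 0)
    (hX : AEStronglyMeasurable (uncurry X) (μ.prod P))
    (hfin : ∫⁻ s, eLpNorm (X s) 2 P ∂μ ≠ ∞) :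
    HasLaw (fun ω ↦ ∫ s, X s ω ∂μ)
      (gaussianReal 0 (∫ r, ∫ s, cov[X r, X s; P] ∂μ ∂μ).toNNReal) P := by
  have := hG.isProbabilityMeasure
  have h_gauss := hasGaussianLaw_integral hG hX hfin
  refine ⟨h_gauss.aemeasurable, ?_⟩
  rw [h_gauss.map_eq_gaussianReal, integral_integral_swap_of_lintegral_eLpNorm_ne_top hX hfin,
    variance_integral hX hfin]
  simp only [h_mean, integral_zero]

theorem ae_integrable_and_hasLaw_integral_mul_brownian {T : Type*} [MeasurableSpace T]
    {μ : Measure T} [SFinite μ] {B : ℝ≥0 → Ω → ℝ} (hB : IsBrownianReal B P) {τ : T → ℝ≥0}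
    (hτ : Measurable τ) {f : T → ℝ} (hf : AEStronglyMeasurable f μ)
    (hfin : Integrable (fun s ↦ f s * √(τ s)) μ) :
    (∀ᵐ ω ∂P, Integrable (fun s ↦ f s * B (τ s) ω) μ) ∧
    HasLaw (fun ω ↦ ∫ s, f s * B (τ s) ω ∂μ)
      (gaussianReal 0 (∫ r, ∫ s, f r * f s * min (τ r) (τ s) ∂μ ∂μ).toNNReal) P := by
  have hB_pre := hB.toIsPreBrownianReal
  have hG : IsGaussianProcess (fun s ω ↦ f s * B (τ s) ω) P :=
    (hB_pre.isGaussianProcess.comp_right τ).smul f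
  have := hG.isProbabilityMeasure
  have h_meas : AEStronglyMeasurable (uncurry fun s ω ↦ f s * B (τ s) ω) (μ.prod P) :=
    hf.comp_fst.mul (aestronglyMeasurable_timeChange_of_ae_continuous hτ.stronglyMeasurable
      (fun t ↦ (hB_pre.aemeasurable t).aestronglyMeasurable) hB.cont)
  have h_mean (s : T) : P[fun ω ↦ f s * B (τ s) ω] = 0 := by
    rw [integral_const_mul, hB_pre.integral_eval, mul_zero]
  have h_cov (r s : T) : cov[fun ω ↦ f r * B (τ r) ω, fun ω ↦ f s * B (τ s) ω; P]
      = f r * f s * min (τ r) (τ s) := by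
    rw [covariance_const_mul_left, covariance_const_mul_right, hB_pre.covariance_fun_eval]
    push_cast
    ring
  have h_norm (s : T) : eLpNorm (fun ω ↦ f s * B (τ s) ω) 2 P = ‖f s * √(τ s)‖ₑ := by
    have h_gauss := hG.hasGaussianLaw_eval s
    rw [eLpNorm_two_eq_sqrt_variance h_gauss.memLp_two (h_mean s),
      ← covariance_self h_gauss.aemeasurable, h_cov, min_self, Real.sqrt_mul (mul_self_nonneg _),
      Real.sqrt_mul_self_eq_abs, Real.enorm_eq_ofReal_abs, abs_mul,
      abs_of_nonneg (Real.sqrt_nonneg _)]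
  have h_lintegral : ∫⁻ s, eLpNorm (fun ω ↦ f s * B (τ s) ω) 2 P ∂μ ≠ ∞ := by
    simp only [h_norm]
    exact hfin.2.ne
  refine ⟨ae_integrable_of_lintegral_eLpNorm_ne_top h_meas h_lintegral, ?_⟩
  simpa only [h_cov] using hasLaw_integral_of_centered hG h_mean h_meas h_lintegral

end BrownianIntegral

section Kernel

theorem integral_integral_eq_two_smul_of_symm {α E : Type*} [LinearOrder α] [TopologicalSpace α]
    [OrderClosedTopology α] [SecondCountableTopology α] [MeasurableSpace α] [OpensMeasurableSpace α]
    [NormedAddCommGroup E] [NormedSpace ℝ E] {μ : Measure α} [SFinite μ] [NullSingletonClass μ]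
    {K : α → α → E} (hK : Integrable (uncurry K) (μ.prod μ)) (h_symm : ∀ r s, K r s = K s r) :
    ∫ r, ∫ s, K r s ∂μ ∂μ = (2 : ℝ) • ∫ r, ∫ s in Iic r, K r s ∂μ ∂μ := by
  set L : α → α → E := fun r s ↦ (Iic r).indicator (K r) s
  have hL : Integrable (uncurry L) (μ.prod μ) :=
    hK.indicator (measurableSet_le measurable_snd measurable_fst)
  have h_split (r : α) : K r =ᵐ[μ] fun s ↦ L r s + L s r := by
    filter_upwards [compl_mem_ae_iff.2 (measure_singleton r)] with s hs
    rcases lt_or_gt_of_ne hs with h | h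
    · simp [L, h.le, h.not_ge]
    · simp [L, h.le, h.not_ge, h_symm r s]
  calc ∫ r, ∫ s, K r s ∂μ ∂μ
  _ = ∫ r, ∫ s, (L r s + L s r) ∂μ ∂μ :=
      integral_congr_ae (.of_forall fun r ↦ integral_congr_ae (h_split r))
  _ = ∫ r, ∫ s, L r s ∂μ ∂μ + ∫ r, ∫ s, L s r ∂μ ∂μ := integral_integral_add hL hL.swap
  _ = (2 : ℝ) • ∫ r, ∫ s, L r s ∂μ ∂μ := by
      rw [← integral_integral_swap hL, two_smul]
  _ = (2 : ℝ) • ∫ r, ∫ s in Iic r, K r s ∂μ ∂μ := by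
      simp only [L, integral_indicator measurableSet_Iic]

theorem integrableOn_rpow_mul_sqrt {a : ℝ} (ha : -3 / 2 < a) (t : ℝ) :
    IntegrableOn (fun s : ℝ ↦ s ^ a * √s) (Ioc 0 t) := by
  have h_int : IntegrableOn (fun s : ℝ ↦ s ^ (a + 1 / 2)) (Ioc 0 t) :=
    (intervalIntegral.intervalIntegrable_rpow' (by linarith)).1
  refine h_int.congr_fun (fun s hs ↦ ?_) measurableSet_Ioc
  rw [Real.sqrt_eq_rpow, ← Real.rpow_add hs.1]

theorem min_le_sqrt_mul_sqrt {r s : ℝ} (hr : 0 ≤ r) (hs : 0 ≤ s) : min r s ≤ √r * √s := by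
  rw [← Real.sqrt_mul hr]
  refine Real.le_sqrt_of_sq_le ?_
  rw [sq]
  exact mul_le_mul (min_le_left r s) (min_le_right r s) (le_min hr hs) hr

theorem integrable_rpow_mul_rpow_mul_min {a : ℝ} (ha : -3 / 2 < a) (t : ℝ) :
    Integrable (uncurry fun r s : ℝ ↦ r ^ a * s ^ a * min r s)
      ((volume.restrict (Ioc 0 t)).prod (volume.restrict (Ioc 0 t))) := by
  have h_int := integrableOn_rpow_mul_sqrt ha t
  refine (h_int.mul_prod h_int).mono' (by fun_prop) ?_
  rw [Measure.prod_restrict]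
  filter_upwards [ae_restrict_mem (measurableSet_Ioc.prod measurableSet_Ioc)] with ⟨r, s⟩ ⟨hr, hs⟩
  have h_pow : 0 ≤ r ^ a * s ^ a :=
    mul_nonneg (Real.rpow_nonneg hr.1.le a) (Real.rpow_nonneg hs.1.le a)
  calc ‖r ^ a * s ^ a * min r s‖
  _ = r ^ a * s ^ a * min r s :=
      Real.norm_of_nonneg (mul_nonneg h_pow (le_min hr.1.le hs.1.le))
  _ ≤ r ^ a * s ^ a * (√r * √s) :=
      mul_le_mul_of_nonneg_left (min_le_sqrt_mul_sqrt hr.1.le hs.1.le) h_pow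
  _ = r ^ a * √r * (s ^ a * √s) := mul_mul_mul_comm ..

theorem setIntegral_Ioc_rpow {b : ℝ} (hb : -1 < b) {t : ℝ} (ht : 0 ≤ t) :
    ∫ s in Ioc 0 t, s ^ b = t ^ (b + 1) / (b + 1) := by
  rw [← intervalIntegral.integral_of_le ht, integral_rpow (.inl hb),
    Real.zero_rpow (by linarith), sub_zero]

theorem setIntegral_Ioc_rpow_mul_rpow_mul_min {a : ℝ} (ha : -2 < a) {r : ℝ} (hr : 0 < r) :
    ∫ s in Ioc 0 r, r ^ a * s ^ a * min r s = r ^ (2 * a + 2) / (a + 2) := by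
  calc ∫ s in Ioc 0 r, r ^ a * s ^ a * min r s
  _ = ∫ s in Ioc 0 r, r ^ a * s ^ (a + 1) := by
      refine setIntegral_congr_fun measurableSet_Ioc fun s hs ↦ ?_
      simp only [min_eq_right hs.2, mul_assoc, Real.rpow_add_one hs.1.ne']
  _ = r ^ a * (r ^ (a + 2) / (a + 2)) := by
      rw [integral_const_mul, setIntegral_Ioc_rpow (by linarith) hr.le]
      ring_nf
  _ = r ^ (2 * a + 2) / (a + 2) := by
      rw [← mul_div_assoc, ← Real.rpow_add hr]
      ring_nf

theorem integral_integral_rpow_mul_rpow_mul_min {a : ℝ} (ha : -3 / 2 < a) {t : ℝ} (ht : 0 ≤ t) :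
    ∫ r in Ioc 0 t, ∫ s in Ioc 0 t, r ^ a * s ^ a * min r s
      = 2 * t ^ (2 * a + 3) / ((a + 2) * (2 * a + 3)) := by
  have h_symm (r s : ℝ) : r ^ a * s ^ a * min r s = s ^ a * r ^ a * min s r := by
    rw [mul_comm (r ^ a), min_comm]
  calc ∫ r in Ioc 0 t, ∫ s in Ioc 0 t, r ^ a * s ^ a * min r s
  _ = 2 * ∫ r in Ioc 0 t, ∫ s in Ioc 0 r, r ^ a * s ^ a * min r s := by
      rw [integral_integral_eq_two_smul_of_symm (integrable_rpow_mul_rpow_mul_min ha t) h_symm,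
        smul_eq_mul]
      congr 1
      refine setIntegral_congr_fun measurableSet_Ioc fun r hr ↦ ?_
      rw [Measure.restrict_restrict measurableSet_Iic, Iic_inter_Ioc_of_le hr.2]
  _ = 2 * ∫ r in Ioc 0 t, r ^ (2 * a + 2) / (a + 2) := by
      congr 1
      exact setIntegral_congr_fun measurableSet_Ioc fun r hr ↦
        setIntegral_Ioc_rpow_mul_rpow_mul_min (by linarith) hr.1
  _ = 2 * t ^ (2 * a + 3) / ((a + 2) * (2 * a + 3)) := by
      rw [integral_div, setIntegral_Ioc_rpow (by linarith) ht,
        show 2 * a + 2 + 1 = 2 * a + 3 by ring, div_div, ← mul_div_assoc, mul_comm (2 * a + 3)]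

end Kernel

section Bridge

variable {Ω : Type*} [MeasurableSpace Ω] {P : Measure Ω}

theorem isGaussianProcess_of_hasGaussianLaw_sum {T : Type*} {X : T → Ω → ℝ}
    (hX : ∀ t, AEMeasurable (X t) P)
    (h_sum : ∀ (I : Finset T) (c : I → ℝ), HasGaussianLaw (fun ω ↦ ∑ i, c i * X i ω) P) :
    IsGaussianProcess X P := by
  refine ⟨fun I ↦ ⟨isGaussian_of_isGaussian_map fun L ↦ ?_⟩⟩
  have h_meas : AEMeasurable (fun ω ↦ I.restrict (X · ω)) P :=
    aemeasurable_pi_lambda _ fun i ↦ hX i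
  rw [AEMeasurable.map_map_of_aemeasurable (by fun_prop) h_meas]
  classical
  convert (h_sum I fun i ↦ L fun j ↦ if i = j then 1 else 0).isGaussian_map using 2
  funext ω
  refine (LinearMap.pi_apply_eq_sum_univ L.toLinearMap _).trans ?_
  exact Finset.sum_congr rfl fun i _ ↦ mul_comm _ _

theorem isBrownianReal_of_isStandardBrownianMotion {W : ℝ → Ω → ℝ}
    (hW : IsStandardBrownianMotion P W) : IsBrownianReal (fun (t : ℝ≥0) ω ↦ W t ω) P := by
  obtain ⟨h_prob, h_meas, h_cont, -, h_gauss, h_cov⟩ := hW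
  have hG : IsGaussianProcess (fun (t : ℝ≥0) ω ↦ W t ω) P := by
    refine isGaussianProcess_of_hasGaussianLaw_sum (fun t ↦ (h_meas t).aemeasurable)
      fun I c ↦ ⟨?_⟩
    obtain ⟨v, hv⟩ := h_gauss I.card (fun i ↦ c (I.equivFin.symm i))
      (fun i ↦ (I.equivFin.symm i : ℝ≥0)) fun i ↦ NNReal.coe_nonneg _
    have h_reindex (ω : Ω) := I.equivFin.symm.sum_comp fun i ↦ c i * W (i : ℝ≥0) ω
    simp only [h_reindex] at hv
    rw [hv]
    infer_instance
  have h_mean (t : ℝ≥0) : P[W t] = 0 := by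
    obtain ⟨v, hv⟩ := h_gauss 1 1 (fun _ ↦ t) fun _ ↦ t.2
    have h_law : HasLaw (W t) (gaussianReal 0 v) P :=
      ⟨(h_meas t).aemeasurable, by simpa using hv⟩
    rw [h_law.integral_eq, integral_id_gaussianReal]
  refine ⟨hG.isPreBrownianReal_of_covariance h_mean fun s t hst ↦ ?_, ?_⟩
  · have h_memLp (u : ℝ≥0) : MemLp (W u) 2 P := (hG.hasGaussianLaw_eval u).memLp_two
    rw [covariance_eq_sub (h_memLp s) (h_memLp t), h_mean, zero_mul, sub_zero]
    exact (h_cov s s.2 t t.2).trans (min_eq_left hst)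
  · filter_upwards [h_cont] with ω hω
    exact hω.comp_continuous NNReal.continuous_coe fun t ↦ t.2

end Bridge

theorem ae_integrableOn_and_hasLaw_integral_rpow_mul_brownian {Ω : Type*} [MeasurableSpace Ω]
    {P : Measure Ω} {B : ℝ≥0 → Ω → ℝ} (hB : IsBrownianReal B P) {a : ℝ} (ha : -3 / 2 < a) {t : ℝ}
    (ht : 0 ≤ t) :
    (∀ᵐ ω ∂P, IntegrableOn (fun s ↦ s ^ a * B s.toNNReal ω) (Ioc 0 t)) ∧
    HasLaw (fun ω ↦ ∫ s in Ioc 0 t, s ^ a * B s.toNNReal ω)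
      (gaussianReal 0 (2 * t ^ (2 * a + 3) / ((a + 2) * (2 * a + 3))).toNNReal) P := by
  have h_int : Integrable (fun s : ℝ ↦ s ^ a * √s.toNNReal) (volume.restrict (Ioc 0 t)) := by
    refine (integrableOn_rpow_mul_sqrt ha t).congr_fun (fun s hs ↦ ?_) measurableSet_Ioc
    rw [Real.coe_toNNReal s hs.1.le]
  have h_kernel : ∫ r in Ioc 0 t, ∫ s in Ioc 0 t, r ^ a * s ^ a * min r.toNNReal s.toNNReal
      = 2 * t ^ (2 * a + 3) / ((a + 2) * (2 * a + 3)) := by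
    rw [← integral_integral_rpow_mul_rpow_mul_min ha ht]
    refine setIntegral_congr_fun measurableSet_Ioc fun r hr ↦
      setIntegral_congr_fun measurableSet_Ioc fun s hs ↦ ?_
    simp [hr.1.le, hs.1.le]
  rw [← h_kernel]
  exact ae_integrable_and_hasLaw_integral_mul_brownian hB measurable_real_toNNReal
    (by fun_prop) h_int

theorem limiting_cvar_process_gaussian_general {Ω : Type*} [MeasurableSpace Ω]
    (P : Measure Ω) (W : ℝ → Ω → ℝ) (hW : IsStandardBrownianMotion P W)
    (γ : ℝ) (hγ : γ < 1 / 2) (t : ℝ) (ht : 0 < t) :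
    (∀ᵐ ω ∂P, IntegrableOn (fun s => s ^ (-γ - 1) * W s ω) (Ioc (0 : ℝ) t)) ∧
    Measure.map (fun ω => (1 / t) * ∫ s in Ioc (0 : ℝ) t, s ^ (-γ - 1) * W s ω) P
      = gaussianReal 0 (2 * t ^ (-2 * γ - 1) / ((1 - γ) * (1 - 2 * γ))).toNNReal := by
  have h_eqOn (ω : Ω) : EqOn (fun s ↦ s ^ (-γ - 1) * W s.toNNReal ω)
      (fun s ↦ s ^ (-γ - 1) * W s ω) (Ioc 0 t) := fun s hs ↦ by
    simp only [Real.coe_toNNReal s hs.1.le]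
  obtain ⟨h_int, h_law⟩ := ae_integrableOn_and_hasLaw_integral_rpow_mul_brownian
    (isBrownianReal_of_isStandardBrownianMotion hW) (a := -γ - 1) (by linarith) ht.le
  simp only [integrableOn_congr_fun (h_eqOn _) measurableSet_Ioc] at h_int
  simp only [setIntegral_congr_fun measurableSet_Ioc (h_eqOn _)] at h_law
  refine ⟨h_int, ?_⟩
  have h_pow : t ^ (2 * (-γ - 1) + 3) = t ^ (-2 * γ - 1) * t ^ 2 := by
    rw [← Real.rpow_add_natCast ht.ne']
    ring_nf
  rw [(gaussianReal_const_mul h_law (1 / t)).map_eq, mul_zero]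
  congr 1
  rw [← Real.toNNReal_of_nonneg, ← Real.toNNReal_mul (sq_nonneg _), h_pow]
  congr 1
  field_simp
  ring_nf

/-- for `γ < 1/2`, `γ ≠ 0` and `t > 0`, the random variable
`B̃(t) = (1/t)∫₀ᵗ s^(−γ−1) W(s) ds` is well defined (the integral converges a.s.)
and is Gaussian with mean `0` and variance `2 t^(−2γ−1)/((1−γ)(1−2γ))`. -/
theorem limiting_cvar_process_gaussian {Ω : Type*} [MeasurableSpace Ω]
    (P : Measure Ω) (W : ℝ → Ω → ℝ) (hW : IsStandardBrownianMotion P W)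
    (γ : ℝ) (hγ : γ < 1 / 2) (hγ0 : γ ≠ 0) (t : ℝ) (ht : 0 < t) :
    (∀ᵐ ω ∂P, IntegrableOn (fun s => s ^ (-γ - 1) * W s ω) (Ioc (0 : ℝ) t)) ∧
    Measure.map (fun ω => (1 / t) * ∫ s in Ioc (0 : ℝ) t, s ^ (-γ - 1) * W s ω) P
      = gaussianReal 0 (2 * t ^ (-2 * γ - 1) / ((1 - γ) * (1 - 2 * γ))).toNNReal :=
  limiting_cvar_process_gaussian_general P W hW γ hγ t ht
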